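/- Let k be a field of characteristic zero, let V be a finite-dimensional k-vector space, let T_p ⊆ T_{p-1} ⊆ ⋯ ⊆ T_1 be a chain of linear subspaces of End(V) with T_p ≠ 0, and let 1 ≤ p_0 ≤ p. Assume that every element of T_1 is a nilpotent endomorphism of V and that ST = TS for all T ∈ T_1 and S ∈ T_{p_0}. Then there exist integers s_1 ≥ s_2 ≥ ⋯ ≥ s_p ≥ 1, a linearly independent family v_1, ..., v_{s_1} in V, and linear subspaces T_{k,j} ⊆ End(V) for 1 ≤ k ≤ p, 1 ≤ j ≤ s_k, satisfying: (1) T_k = T_{k,1} ⊕ ⋯ ⊕ T_{k,s_k} (internal direct sum) for each k, with T_{k+1,j} ⊆ T_{k,j} whenever j ≤ s_{k+1}; (2) dim T_{k,j} = dim (T_{k,j}·v_j) for all j ≤ s_k; (3) T_{k,j}·v_i = 0 for all 1 ≤ i < j ≤ s_k; (4) T(v) ∈ T_{k,i}·v_i for every T ∈ T_{k,j}, every v ∈ V and all 1 ≤ i < j ≤ s_k; and moreover (5) T_{1,1}·v_1 ∩ span_k{v_1, ..., v_{s_{p_0}}} = 0. -/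

import Mathlib

open Module

/-!
Call `v` generic for a space `U` of operators if every operator of `U` that kills `v` has its
values in `U · v`. If `f v = 0` but `f x ∉ U · v`, then `dim U · (v + t x) > dim U · v` for almost
all scalars `t`, so over an infinite field a vector maximizing `∑ dim Uᵢ · v` is generic for
finitely many `Uᵢ` at once.

Choose `v₀, v₁, …` greedily, each `vₙ` generic for the spaces of all operators of the `Tₖ` that kill
`v₀, …, vₙ₋₁`. The `n`-th summand of `Tₖ` is a complement, within the operators killing
`v₀, …, vₙ₋₁`, of those killing also `vₙ`; since the `Tₖ` form a chain, a single subspace cuts out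
these complements for all `k`. For the last assertion, suppose `f ∈ T₀` and `f v₀` lies in the span
of `v₀, …, vₙ` with `n > 0`. Operators of `T_{p₀}` killing `v₀, …, vₙ₋₁` commute with `f`, so they
kill `f v₀`, and one of them does not kill `vₙ`; hence `vₙ` does not occur in `f v₀`.
Inductively `f v₀` is a multiple of `v₀`, and so it is zero.
-/

open Filter hiding ker
open LinearMap hiding add_apply smul_apply

section Pencils

variable {K : Type*} [Field K]

theorem eventually_isUnit_one_add_smul {A : Type*} [Ring A] [Algebra K A] {a : A}
    (ha : (spectrum K a).Finite) : ∀ᶠ t : K in cofinite, IsUnit (1 + t • a) := by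
  have hinj : Function.Injective fun t : K => -t⁻¹ := neg_injective.comp inv_injective
  filter_upwards [hinj.tendsto_cofinite.eventually ha.eventually_cofinite_notMem,
    eventually_cofinite_ne 0] with t hspec ht
  have hunit : IsUnit (algebraMap K A (-t⁻¹) - a) := spectrum.notMem_iff.1 hspec
  have hfactor : 1 + t • a = Units.mk0 (-t) (neg_ne_zero.2 ht) • (algebraMap K A (-t⁻¹) - a) := by
    rw [Units.smul_mk0, Algebra.algebraMap_eq_smul_one, smul_sub, smul_smul,
      neg_mul_neg, mul_inv_cancel₀ ht, one_smul, neg_smul, sub_neg_eq_add]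
  rwa [hfactor, isUnit_smul_iff]

variable {M N : Type*} [AddCommGroup M] [Module K M] [AddCommGroup N] [Module K N]

theorem eventually_linearIndependent_add_smul {ι : Type*} [Finite ι] {w : ι → N}
    (hw : LinearIndependent K w) (b : ι → N) :
    ∀ᶠ t : K in cofinite, LinearIndependent K (w + t • b) := by
  obtain ⟨g, hg⟩ := exists_leftInverse_of_injective (Finsupp.linearCombination K w)
    (ker_eq_bot.2 hw)
  let L : End K (ι →₀ K) := g ∘ₗ Finsupp.linearCombination K b
  filter_upwards [eventually_isUnit_one_add_smul (End.finite_spectrum L)] with t ht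
  have hcomp : g ∘ₗ Finsupp.linearCombination K (w + t • b) = 1 + t • L := by
    ext i : 2
    have hgw := congr($hg (Finsupp.single i 1))
    simp only [comp_apply, Finsupp.linearCombination_single, one_smul, id_apply] at hgw
    simp [L, hgw]
  have hinj : Function.Injective (g ∘ₗ Finsupp.linearCombination K (w + t • b)) :=
    hcomp ▸ ((End.isUnit_iff _).1 ht).1
  exact Function.Injective.of_comp (by simpa only [coe_comp] using hinj)

theorem eventually_finrank_range_sup_map_ker_le [FiniteDimensional K M] (φ ψ : M →ₗ[K] N) :
    ∀ᶠ t : K in cofinite,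
      finrank K ↥(range φ ⊔ (ker φ).map ψ) ≤ finrank K (range (φ + t • ψ)) := by
  let y := finBasis K ↥(range φ ⊔ (ker φ).map ψ)
  have hy : ∀ i, ∃ a b : M, φ b = 0 ∧ φ a + ψ b = y i := fun i => by
    obtain ⟨_, ⟨a, rfl⟩, _, ⟨b, hb, rfl⟩, hab⟩ := Submodule.mem_sup.1 (y i).2
    exact ⟨a, b, hb, hab⟩
  choose a b hb hab using hy
  have hli : LinearIndependent K fun i => (y i : N) :=
    y.linearIndependent.map' _ (Submodule.ker_subtype _)
  filter_upwards [eventually_linearIndependent_add_smul hli fun i => ψ (a i),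
    eventually_cofinite_ne 0] with t hlit ht
  have hvalue : ∀ i, (φ + t • ψ) (a i + t⁻¹ • b i) = y i + t • ψ (a i) := fun i => by
    simp only [LinearMap.add_apply, LinearMap.smul_apply, map_add, map_smul, hb, zero_add,
      inv_smul_smul₀ ht, ← hab]
    abel
  have hli_range : LinearIndependent K fun i => (φ + t • ψ).rangeRestrict (a i + t⁻¹ • b i) := by
    refine LinearIndependent.of_comp (range (φ + t • ψ)).subtype ?_
    change LinearIndependent K fun i => (φ + t • ψ) (a i + t⁻¹ • b i)
    exact (funext hvalue).symm ▸ hlit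
  simpa using hli_range.fintype_card_le_finrank

end Pencils

section Generic

variable {K E F ι : Type*} [Field K] [AddCommGroup E] [Module K E] [AddCommGroup F] [Module K F]

/-- The vector `v` is *generic* for the space `U` of operators if every operator of `U` killing `v`
has its values in `U · v`, here written `U.map (applyₗ v)`. -/
def IsGeneric (U : Submodule K (E →ₗ[K] F)) (v : E) : Prop :=
  ∀ f ∈ U, f v = 0 → ∀ x, f x ∈ U.map (applyₗ v)

theorem IsGeneric.eq_bot {U : Submodule K (E →ₗ[K] F)} {v : E} (hv : IsGeneric U v)
    (h : ∀ f ∈ U, f v = 0) : U = ⊥ := by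
  refine (Submodule.eq_bot_iff U).2 fun f hf => LinearMap.ext fun x => ?_
  obtain ⟨g, hg, hgx⟩ := hv f hf (h f hf) x
  exact hgx.symm.trans (h g hg)

theorem eventually_finrank_map_applyₗ_sup_le (U : Submodule K (E →ₗ[K] F)) [FiniteDimensional K U]
    (v x : E) :
    ∀ᶠ t : K in cofinite,
      finrank K ↥(U.map (applyₗ v) ⊔ (U ⊓ ker (applyₗ v)).map (applyₗ x)) ≤
        finrank K (U.map (applyₗ (v + t • x))) := by
  have hpencil : ∀ t : K, (applyₗ v).domRestrict U + t • (applyₗ x).domRestrict U =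
      (applyₗ (v + t • x)).domRestrict U := fun t => by
    ext f
    simp
  have hker : (ker ((applyₗ v).domRestrict U)).map ((applyₗ x).domRestrict U) =
      (U ⊓ ker (applyₗ v)).map (applyₗ x) := by
    rw [domRestrict, domRestrict, ker_comp, Submodule.map_comp, Submodule.map_comap_subtype]
  have hle := eventually_finrank_range_sup_map_ker_le ((applyₗ v).domRestrict U)
    ((applyₗ x).domRestrict U)
  rw [hker, range_domRestrict] at hle
  filter_upwards [hle] with t ht
  rwa [hpencil, range_domRestrict] at ht

theorem exists_forall_isGeneric [Infinite K] [Finite ι] (U : ι → Submodule K (E →ₗ[K] F))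
    [∀ i, FiniteDimensional K (U i)] : ∃ v, ∀ i, IsGeneric (U i) v := by
  cases nonempty_fintype ι
  let rankSum : E → ℕ := fun v => ∑ i, finrank K ((U i).map (applyₗ v))
  have hbdd : BddAbove (Set.range rankSum) := by
    refine ⟨∑ i, finrank K (U i), ?_⟩
    rintro _ ⟨v, rfl⟩
    exact Finset.sum_le_sum fun i _ => Submodule.finrank_map_le _ _
  obtain ⟨v, hv⟩ := Nat.sSup_mem (Set.range_nonempty rankSum) hbdd
  refine ⟨v, fun i f hf hfv x => ?_⟩
  by_contra hfx
  obtain ⟨t, ht⟩ := (eventually_all.2 fun i =>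
    eventually_finrank_map_applyₗ_sup_le (U i) v x).exists
  have hlt : finrank K ((U i).map (applyₗ v)) <
      finrank K ↥((U i).map (applyₗ v) ⊔ (U i ⊓ ker (applyₗ v)).map (applyₗ x)) :=
    Submodule.finrank_lt_finrank_of_lt <| left_lt_sup.2 fun hle =>
      hfx (hle ⟨f, ⟨hf, hfv⟩, rfl⟩)
  have hincrease : rankSum v < rankSum (v + t • x) :=
    Finset.sum_lt_sum
      (fun j _ => (Submodule.finrank_mono le_sup_left).trans (ht j))
      ⟨i, Finset.mem_univ i, hlt.trans_le (ht i)⟩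
  exact hincrease.not_ge (hv ▸ le_csSup hbdd ⟨_, rfl⟩)

end Generic

section Complements

variable {α : Type*} [Lattice α] [BoundedOrder α] [IsModularLattice α] [ComplementedLattice α]

theorem exists_le_disjoint_sup_inf_eq {a c r : α} (hca : c ≤ a) (hcr : Disjoint c r) :
    ∃ d, c ≤ d ∧ d ≤ a ∧ Disjoint d r ∧ d ⊔ a ⊓ r = a := by
  obtain ⟨e, hce, he⟩ := (hcr.mono_right (inf_le_right : a ⊓ r ≤ r)).exists_isCompl
  refine ⟨e ⊓ a, le_inf hce hca, inf_le_right, ?_, ?_⟩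
  · rw [disjoint_iff, inf_assoc, he.inf_eq_bot]
  · rw [sup_comm, ← sup_inf_assoc_of_le e inf_le_left, he.symm.sup_eq_top, top_inf_eq]

theorem exists_disjoint_forall_inf_sup_inf_eq {ι : Type*} [LinearOrder ι] [Finite ι] {a : ι → α}
    (ha : Monotone a) (r : α) : ∃ c, Disjoint c r ∧ ∀ i, a i ⊓ c ⊔ a i ⊓ r = a i := by
  suffices key : ∀ s : Finset ι, ∃ c, Disjoint c r ∧ (∀ i ∈ s, a i ⊓ c ⊔ a i ⊓ r = a i) ∧
      ∀ j, (∀ i ∈ s, i < j) → c ≤ a j by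
    cases nonempty_fintype ι
    obtain ⟨c, hcr, hc, -⟩ := key Finset.univ
    exact ⟨c, hcr, fun i => hc i (Finset.mem_univ i)⟩
  intro s
  induction s using Finset.induction_on_max with
  | empty => exact ⟨⊥, disjoint_bot_left, by simp, fun _ _ => bot_le⟩
  | insert m s hm ih =>
    obtain ⟨c, hcr, hc, hcle⟩ := ih
    obtain ⟨d, hcd, hdm, hdr, hd⟩ := exists_le_disjoint_sup_inf_eq (hcle m hm) hcr
    refine ⟨d, hdr, fun i hi => ?_, fun j hj =>
      hdm.trans (ha (hj m (Finset.mem_insert_self m s)).le)⟩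
    rcases Finset.mem_insert.1 hi with rfl | his
    · rw [inf_eq_right.2 hdm, hd]
    · refine le_antisymm (sup_le inf_le_left inf_le_left) ?_
      calc a i = a i ⊓ c ⊔ a i ⊓ r := (hc i his).symm
        _ ≤ a i ⊓ d ⊔ a i ⊓ r := by gcongr

end Complements

section Triangular

variable {K M N ι : Type*} [Field K] [AddCommGroup M] [Module K M] [AddCommGroup N] [Module K N]
  [LinearOrder ι]

theorem iSupIndep_of_triangular [WellFoundedLT ι] {W : ι → Submodule K M} (f : ι → M →ₗ[K] N)
    (hlt : ∀ i j, i < j → W j ≤ ker (f i)) (hdisj : ∀ i, Disjoint (W i) (ker (f i))) :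
    iSupIndep W := by
  rw [iSupIndep_iff_finsetSum_eq_zero_imp_eq_zero]
  intro s w hw hsum i
  induction i using WellFoundedLT.induction with
  | ind i ih =>
    intro hi
    have hother : ∀ j ∈ s, j ≠ i → f i (w j) = 0 := fun j hj hne => by
      rcases lt_or_gt_of_ne hne with hji | hij
      · rw [ih j hji hj, map_zero]
      · exact hlt i j hij (hw j hj)
    refine Submodule.disjoint_def.1 (hdisj i) (w i) (hw i hi) (mem_ker.2 ?_)
    rw [← Finset.sum_eq_single_of_mem i hi hother, ← map_sum, hsum, map_zero]

theorem linearIndependent_of_triangular [WellFoundedGT ι] {v : ι → M} (f : ι → M →ₗ[K] N)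
    (hlt : ∀ i j, i < j → f j (v i) = 0) (hne : ∀ i, f i (v i) ≠ 0) : LinearIndependent K v := by
  have hv : ∀ i, v i ≠ 0 := fun i h => hne i (by rw [h, map_zero])
  have hdisj : ∀ i, Disjoint (K ∙ v i) (ker (f i)) := fun i =>
    ((Submodule.disjoint_span_singleton' (hv i)).2 (hne i)).symm
  have hindep : iSupIndep fun i => K ∙ v i :=
    iSupIndep_of_triangular (ι := ιᵒᵈ) f
      (fun i j hij => (Submodule.span_singleton_le_iff_mem _ _).2 (hlt j i hij)) hdisj
  exact hindep.linearIndependent _ (fun i => Submodule.mem_span_singleton_self (v i)) hv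

end Triangular

section Greedy

variable {K E F ι : Type*} [Field K] [AddCommGroup E] [Module K E] [AddCommGroup F] [Module K F]

/-- The operators of `T` killing the first `n` vectors `v 0, …, v (n - 1)`. -/
def annihilating (T : Submodule K (E →ₗ[K] F)) (v : ℕ → E) (n : ℕ) : Submodule K (E →ₗ[K] F) :=
  T ⊓ ⨅ j < n, ker (applyₗ (v j))

variable {T T' : Submodule K (E →ₗ[K] F)} {v : ℕ → E} {f : E →ₗ[K] F} {m n : ℕ}

theorem mem_annihilating : f ∈ annihilating T v n ↔ f ∈ T ∧ ∀ j < n, f (v j) = 0 := by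
  simp [annihilating]

@[simp]
theorem annihilating_zero : annihilating T v 0 = T := by
  simp [annihilating]

theorem annihilating_succ : annihilating T v (n + 1) = annihilating T v n ⊓ ker (applyₗ (v n)) := by
  rw [annihilating, annihilating, Nat.iInf_lt_succ, inf_assoc]

theorem annihilating_mono (h : T ≤ T') : annihilating T v n ≤ annihilating T' v n :=
  inf_le_inf_right _ h

theorem annihilating_antitone : Antitone (annihilating T v) := fun _ _ hmn _ hf =>
  have ⟨hfT, hkill⟩ := mem_annihilating.1 hf
  mem_annihilating.2 ⟨hfT, fun j hj => hkill j (hj.trans_le hmn)⟩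

theorem annihilating_le : annihilating T v n ≤ T :=
  inf_le_left

theorem annihilating_le_ker (h : m < n) : annihilating T v n ≤ ker (applyₗ (v m)) := fun _ hf =>
  (mem_annihilating.1 hf).2 m h

theorem apply_eq_zero_of_mem_annihilating (hf : f ∈ annihilating T v n) {y : E}
    (hy : y ∈ Submodule.span K (v '' Set.Iio n)) : f y = 0 := by
  have hle : Submodule.span K (v '' Set.Iio n) ≤ ker f :=
    Submodule.span_le.2 <| Set.image_subset_iff.2 (mem_annihilating.1 hf).2
  exact hle hy

instance [FiniteDimensional K T] : FiniteDimensional K (annihilating T v n) :=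
  Submodule.finiteDimensional_of_le annihilating_le

/-- The least number of vectors `v 0, v 1, …` that no nonzero operator of `T` kills simultaneously;
meaningful only if such a number exists, as it does in the situation of
`IsGreedy.annihilating_greedyLength`. -/
noncomputable def greedyLength (T : Submodule K (E →ₗ[K] F)) (v : ℕ → E) : ℕ :=
  sInf {n | annihilating T v n = ⊥}

theorem annihilating_ne_bot_of_lt_greedyLength (h : n < greedyLength T v) :
    annihilating T v n ≠ ⊥ :=
  Nat.notMem_of_lt_sInf h

/-- A sequence of vectors is *greedy* for `T` if each of its vectors is generic for the space of
those operators of `T` that kill all the previous vectors. -/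
def IsGreedy (T : Submodule K (E →ₗ[K] F)) (v : ℕ → E) : Prop :=
  ∀ n, IsGeneric (annihilating T v n) (v n)

theorem exists_forall_isGreedy [Infinite K] [Finite ι] (T : ι → Submodule K (E →ₗ[K] F))
    [∀ i, FiniteDimensional K (T i)] : ∃ v, ∀ i, IsGreedy (T i) v := by
  choose! g hg using fun (U : ι → Submodule K (E →ₗ[K] F)) (_ : ∀ i, FiniteDimensional K (U i)) =>
    exists_forall_isGeneric U
  let U : ℕ → ι → Submodule K (E →ₗ[K] F) :=
    fun n => (fun A i => A i ⊓ ker (applyₗ (g A)))^[n] T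
  have hU : ∀ n i, U n i = annihilating (T i) (fun n => g (U n)) n := fun n => by
    induction n with
    | zero => exact fun i => annihilating_zero.symm
    | succ n ih =>
      intro i
      rw [annihilating_succ, ← ih]
      simp only [U, Function.iterate_succ_apply']
  refine ⟨fun n => g (U n), fun i n => hU n i ▸ hg (U n) (fun j => ?_) i⟩
  rw [hU]
  infer_instance

namespace IsGreedy

theorem exists_apply_ne_zero (hv : IsGreedy T v) (h : n < greedyLength T v) :
    ∃ f ∈ annihilating T v n, f (v n) ≠ 0 := by
  by_contra! hkill
  exact annihilating_ne_bot_of_lt_greedyLength h ((hv n).eq_bot hkill)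

theorem annihilating_greedyLength [FiniteDimensional K T] (hv : IsGreedy T v) :
    annihilating T v (greedyLength T v) = ⊥ := by
  suffices h : ∃ n, annihilating T v n = ⊥ from Nat.sInf_mem h
  by_contra! hne
  refine not_strictAnti_of_wellFoundedLT (fun n => finrank K (annihilating T v n)) <|
    strictAnti_nat_of_succ_lt fun n => Submodule.finrank_lt_finrank_of_lt <|
      (annihilating_antitone n.le_succ).lt_of_ne fun heq => hne n <| (hv n).eq_bot fun f hf => ?_
  exact annihilating_le_ker n.lt_succ_self (heq ▸ hf)

theorem greedyLength_mono [FiniteDimensional K T'] (hv : IsGreedy T' v) (h : T ≤ T') :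
    greedyLength T v ≤ greedyLength T' v :=
  Nat.sInf_le <| le_bot_iff.1 <| (annihilating_mono h).trans hv.annihilating_greedyLength.le

theorem greedyLength_pos [FiniteDimensional K T] (hv : IsGreedy T v) (hT : T ≠ ⊥) :
    0 < greedyLength T v := by
  refine Nat.pos_of_ne_zero fun h => hT ?_
  rw [← annihilating_zero (T := T) (v := v), ← h, hv.annihilating_greedyLength]

theorem linearIndependent (hv : IsGreedy T v) :
    LinearIndependent K fun j : Fin (greedyLength T v) => v j := by
  choose f hf hne using fun j : Fin (greedyLength T v) => hv.exists_apply_ne_zero j.2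
  exact linearIndependent_of_triangular f (fun i j hij => annihilating_le_ker hij (hf j)) hne

theorem mem_span_of_annihilating_apply_eq_zero (hv : IsGreedy T v) (hn : n ≤ greedyLength T v)
    {y : E} (hy : ∀ f ∈ annihilating T v m, f y = 0)
    (hspan : y ∈ Submodule.span K (v '' Set.Iio n)) :
    y ∈ Submodule.span K (v '' Set.Iio m) := by
  induction n with
  | zero => exact Submodule.span_mono (Set.image_mono (Set.Iio_subset_Iio m.zero_le)) hspan
  | succ n ih =>
    rcases lt_or_ge n m with hnm | hmn
    · exact Submodule.span_mono (Set.image_mono (Set.Iio_subset_Iio hnm)) hspan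
    obtain ⟨f, hf, hfv⟩ := hv.exists_apply_ne_zero hn
    rw [← Order.succ_eq_add_one, Order.Iio_succ_eq_insert, Set.image_insert_eq,
      Submodule.mem_span_insert] at hspan
    obtain ⟨c, z, hz, hyz⟩ := hspan
    have hfz : f z = 0 := apply_eq_zero_of_mem_annihilating hf hz
    have hc : c = 0 := by
      have hfy := hy f (annihilating_antitone hmn hf)
      rw [hyz, map_add, map_smul, hfz, add_zero] at hfy
      exact (smul_eq_zero.1 hfy).resolve_right hfv
    rw [hc, zero_smul, zero_add] at hyz
    exact ih (Nat.le_of_succ_le hn) (hyz ▸ hz)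

end IsGreedy

/-- The sequence `W` of subspaces *splits* `T` along `v` if `W n` is a complement, in the space of
the operators of `T` killing `v 0, …, v (n - 1)`, of the operators killing also `v n`. -/
structure IsSplitting (T : Submodule K (E →ₗ[K] F)) (v : ℕ → E)
    (W : ℕ → Submodule K (E →ₗ[K] F)) : Prop where
  disjoint_ker : ∀ n, Disjoint (W n) (ker (applyₗ (v n)))
  sup_annihilating : ∀ n, W n ⊔ annihilating T v (n + 1) = annihilating T v n

theorem exists_forall_isSplitting [LinearOrder ι] [Finite ι] {T : ι → Submodule K (E →ₗ[K] F)}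
    (hT : Antitone T) (v : ℕ → E) :
    ∃ W : ι → ℕ → Submodule K (E →ₗ[K] F), Antitone W ∧ ∀ i, IsSplitting (T i) v (W i) := by
  choose C hdisj hC using fun n => exists_disjoint_forall_inf_sup_inf_eq (ι := ιᵒᵈ)
    (a := fun i => annihilating (T i) v n) (fun _ _ hij => annihilating_mono (hT hij))
    (ker (applyₗ (v n)))
  refine ⟨fun i n => annihilating (T i) v n ⊓ C n,
    fun _ _ hij n => inf_le_inf_right _ (annihilating_mono (hT hij)),
    fun i => ⟨fun n => ?_, fun n => ?_⟩⟩
  · exact (hdisj n).mono_left inf_le_right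
  · rw [annihilating_succ]
    exact hC n i

namespace IsSplitting

variable {W : ℕ → Submodule K (E →ₗ[K] F)}

theorem le_annihilating (hW : IsSplitting T v W) (n : ℕ) : W n ≤ annihilating T v n :=
  le_sup_left.trans (hW.sup_annihilating n).le

theorem le_ker (hW : IsSplitting T v W) (h : m < n) : W n ≤ ker (applyₗ (v m)) :=
  (hW.le_annihilating n).trans (annihilating_le_ker h)

theorem map_applyₗ (hW : IsSplitting T v W) (n : ℕ) :
    (W n).map (applyₗ (v n)) = (annihilating T v n).map (applyₗ (v n)) := by
  rw [← hW.sup_annihilating n, Submodule.map_sup,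
    le_ker_iff_map.1 (annihilating_le_ker n.lt_succ_self), sup_bot_eq]

theorem finrank_map_applyₗ (hW : IsSplitting T v W) (n : ℕ) :
    finrank K ((W n).map (applyₗ (v n))) = finrank K (W n) := by
  rw [← range_domRestrict]
  exact finrank_range_of_inj (injective_domRestrict_iff.2 (hW.disjoint_ker n))

theorem iSupIndep (hW : IsSplitting T v W) : iSupIndep W :=
  iSupIndep_of_triangular (fun n => applyₗ (v n)) (fun _ _ hij => hW.le_ker hij) hW.disjoint_ker

theorem iSup_sup_annihilating (hW : IsSplitting T v W) (n : ℕ) :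
    (⨆ j < n, W j) ⊔ annihilating T v n = T := by
  induction n with
  | zero => simp
  | succ n ih => rw [Nat.iSup_lt_succ, sup_assoc, hW.sup_annihilating, ih]

theorem iSup_eq [FiniteDimensional K T] (hW : IsSplitting T v W) (hv : IsGreedy T v) :
    ⨆ j : Fin (greedyLength T v), W j = T := by
  have hsup := hW.iSup_sup_annihilating (greedyLength T v)
  rw [hv.annihilating_greedyLength, sup_bot_eq, iSup_subtype'] at hsup
  exact (Fin.equivSubtype.iSup_comp (g := fun j : {j // j < greedyLength T v} => W j)).trans hsup

theorem apply_mem_map (hW : IsSplitting T v W) (hv : IsGreedy T v) (hmn : m < n) (hf : f ∈ W n)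
    (x : E) : f x ∈ (W m).map (applyₗ (v m)) := by
  rw [hW.map_applyₗ]
  exact hv m f (annihilating_antitone hmn.le (hW.le_annihilating n hf)) (hW.le_ker hmn hf) x

end IsSplitting

end Greedy

theorem disjoint_map_applyₗ_span {K V : Type*} [Field K] [AddCommGroup V] [Module K V]
    {S T : Submodule K (End K V)} {v : ℕ → V} (hv : IsGreedy T v)
    (heigen : ∀ f ∈ S, ∀ c, f.HasEigenvalue c → c = 0) (hcomm : ∀ f ∈ S, ∀ g ∈ T, Commute g f) :
    Disjoint (S.map (applyₗ (v 0))) (Submodule.span K (v '' Set.Iio (greedyLength T v))) := by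
  rw [Submodule.disjoint_def]
  rintro _ ⟨f, hf, rfl⟩ hspan
  have hkill : ∀ g ∈ annihilating T v 1, g (f (v 0)) = 0 := fun g hg => by
    have hgv : g (v 0) = 0 := annihilating_le_ker zero_lt_one hg
    calc g (f (v 0)) = f (g (v 0)) := congr($(hcomm f hf g (annihilating_le hg)) (v 0))
      _ = 0 := by rw [hgv, map_zero]
  have hmem : f (v 0) ∈ K ∙ v 0 := by
    simpa using hv.mem_span_of_annihilating_apply_eq_zero le_rfl hkill hspan
  obtain ⟨c, hc⟩ := Submodule.mem_span_singleton.1 hmem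
  change f (v 0) = 0
  by_contra hne
  have hv0 : v 0 ≠ 0 := fun h => hne (by rw [h, map_zero])
  have hc0 : c = 0 := heigen f hf c <|
    End.hasEigenvalue_of_hasEigenvector ⟨End.mem_eigenspace_iff.2 hc.symm, hv0⟩
  exact hne (by rw [← hc, hc0, zero_smul])

theorem chain_decomposition_nilpotent_general {K V : Type*} [Field K] [Infinite K]
    [AddCommGroup V] [Module K V] (p : ℕ) (hp : 0 < p) (T : Fin p → Submodule K (End K V))
    [FiniteDimensional K (T ⟨0, hp⟩)]
    (hchain : ∀ i j : Fin p, i ≤ j → T j ≤ T i)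
    (hbot : T ⟨p - 1, Nat.sub_one_lt_of_lt hp⟩ ≠ ⊥) (p₀ : Fin p)
    (heigen : ∀ f ∈ T ⟨0, hp⟩, ∀ c, f.HasEigenvalue c → c = 0)
    (hcomm : ∀ f ∈ T ⟨0, hp⟩, ∀ g ∈ T p₀, g * f = f * g) :
    ∃ (s : Fin p → ℕ) (v : ℕ → V) (W : Fin p → ℕ → Submodule K (Module.End K V)),
      (∀ i j : Fin p, i ≤ j → s j ≤ s i) ∧ (∀ m : Fin p, 1 ≤ s m) ∧
      LinearIndependent K (fun j : Fin (s ⟨0, hp⟩) => v j) ∧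
      (∀ m : Fin p, iSupIndep (fun j : Fin (s m) => W m j)) ∧
      (∀ m : Fin p, (⨆ j : Fin (s m), W m j) = T m) ∧
      (∀ (m : ℕ) (h : m + 1 < p), ∀ j < s ⟨m + 1, h⟩,
        W ⟨m + 1, h⟩ j ≤ W ⟨m, Nat.lt_of_succ_lt h⟩ j) ∧
      (∀ m : Fin p, ∀ j < s m,
        finrank K (W m j) = finrank K ((W m j).map (LinearMap.applyₗ (v j)))) ∧
      (∀ m : Fin p, ∀ i j : ℕ, i < j → j < s m →
        (W m j).map (LinearMap.applyₗ (v i)) = ⊥) ∧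
      (∀ m : Fin p, ∀ i j : ℕ, i < j → j < s m →
        ∀ f ∈ W m j, ∀ x : V, f x ∈ (W m i).map (LinearMap.applyₗ (v i))) ∧
      ((W ⟨0, hp⟩ 0).map (LinearMap.applyₗ (v 0)) ⊓
          Submodule.span K (Set.range fun j : Fin (s p₀) => v j) = ⊥) := by
  have hfin (m : Fin p) : FiniteDimensional K (T m) :=
    Submodule.finiteDimensional_of_le (hchain ⟨0, hp⟩ m (Nat.zero_le m))
  have hne (m : Fin p) : T m ≠ ⊥ := ne_bot_of_le_ne_bot hbot (hchain m _ (Nat.le_sub_one_of_lt m.2))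
  obtain ⟨v, hv⟩ := exists_forall_isGreedy T
  obtain ⟨W, hWanti, hW⟩ := exists_forall_isSplitting (fun i j => hchain i j) v
  refine ⟨fun m => greedyLength (T m) v, v, W,
    fun i j hij => (hv i).greedyLength_mono (hchain i j hij),
    fun m => (hv m).greedyLength_pos (hne m), (hv _).linearIndependent,
    fun m => (hW m).iSupIndep.comp Fin.val_injective, fun m => (hW m).iSup_eq (hv m),
    fun m h j _ => hWanti (Fin.mk_le_mk.2 m.le_succ) j,
    fun m j _ => ((hW m).finrank_map_applyₗ j).symm,
    fun m i j hij _ => le_ker_iff_map.1 ((hW m).le_ker hij),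
    fun m i j hij _ f hf x => (hW m).apply_mem_map (hv m) hij hf x, disjoint_iff.1 ?_⟩
  have hrange : Set.range (fun j : Fin (greedyLength (T p₀) v) => v j) =
      v '' Set.Iio (greedyLength (T p₀) v) := by
    rw [← Fin.range_val, ← Set.range_comp, Function.comp_def]
  rw [hrange]
  exact (disjoint_map_applyₗ_span (hv p₀) heigen hcomm).mono_left
    (Submodule.map_mono (((hW _).le_annihilating 0).trans annihilating_le))

/-- **Theorem 2.3 including the `moreover' part.**  In addition to the conclusions of the
decomposition theorem for a chain `T (p-1) ≤ … ≤ T 0` of subspaces of `End(V)` with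
`T (p-1) ≠ 0`, if every element of `T 0` (the largest subspace, `T_1` of the paper) is
nilpotent and `T 0` commutes elementwise with `T p₀` (`0`-based index `p₀`), then
`(W 0 0 · v 0) ∩ span {v 0, …, v (s p₀ - 1)} = 0`. -/
theorem chain_decomposition_nilpotent
    (K : Type) [Field K] [CharZero K]
    (V : Type) [AddCommGroup V] [Module K V] [FiniteDimensional K V]
    (p : ℕ) (hp : 0 < p) (T : Fin p → Submodule K (Module.End K V))
    (hchain : ∀ i j : Fin p, i ≤ j → T j ≤ T i)
    (hbot : T ⟨p - 1, by omega⟩ ≠ ⊥)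
    (p₀ : Fin p)
    (hnil : ∀ f ∈ T ⟨0, hp⟩, IsNilpotent f)
    (hcomm : ∀ f ∈ T ⟨0, hp⟩, ∀ g ∈ T p₀, g * f = f * g) :
    ∃ (s : Fin p → ℕ) (v : ℕ → V) (W : Fin p → ℕ → Submodule K (Module.End K V)),
      (∀ i j : Fin p, i ≤ j → s j ≤ s i) ∧ (∀ m : Fin p, 1 ≤ s m) ∧
      LinearIndependent K (fun j : Fin (s ⟨0, hp⟩) => v j) ∧
      -- (1) internal direct sums, compatible with the chain
      (∀ m : Fin p, iSupIndep (fun j : Fin (s m) => W m j)) ∧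
      (∀ m : Fin p, (⨆ j : Fin (s m), W m j) = T m) ∧
      (∀ (m : ℕ) (h : m + 1 < p), ∀ j < s ⟨m + 1, h⟩,
        W ⟨m + 1, h⟩ j ≤ W ⟨m, by omega⟩ j) ∧
      -- (2)
      (∀ m : Fin p, ∀ j < s m,
        finrank K (W m j) = finrank K ((W m j).map (LinearMap.applyₗ (v j)))) ∧
      -- (3)
      (∀ m : Fin p, ∀ i j : ℕ, i < j → j < s m →
        (W m j).map (LinearMap.applyₗ (v i)) = ⊥) ∧
      -- (4)
      (∀ m : Fin p, ∀ i j : ℕ, i < j → j < s m →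
        ∀ f ∈ W m j, ∀ x : V, f x ∈ (W m i).map (LinearMap.applyₗ (v i))) ∧
      -- (5)
      ((W ⟨0, hp⟩ 0).map (LinearMap.applyₗ (v 0)) ⊓
          Submodule.span K (Set.range fun j : Fin (s p₀) => v j) = ⊥) :=
  chain_decomposition_nilpotent_general p hp T hchain hbot p₀
    (fun f hf _ hc => (hc.isNilpotent_of_isNilpotent (hnil f hf)).eq_zero) hcomm
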